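/- arXiv:1606.04493 — 2 statements merged into one kernel-verified Lean document; each statement's English description precedes it below -/
import Mathlib

section
/- Let g be a finite-dimensional Lie algebra over a field of characteristic zero. If the Killing form of g is nondegenerate, then every finite-dimensional representation of g is completely reducible. -/
open LieModule LieAlgebra

lemma casimir_exists {k g V : Type*} [Field k] [CharZero k]
    [LieRing g] [LieAlgebra k g] [FiniteDimensional k g] [IsKilling k g]
    [AddCommGroup V] [Module k V] [LieRingModule g V] [LieModule k g V]
    (h : traceForm k g V ≠ 0) :
    ∃ (n : ℕ) (e f : Fin n → g), n ≠ 0 ∧ (∑ i, traceForm k g V (e i) (f i) = n) ∧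
      ∀ (B : g →ₗ[k] g →ₗ[k] V) (x : g), ∑ i, B ⁅x, e i⁆ (f i) + ∑ i, B (e i) ⁅x, f i⁆ = 0 := by
  classical
  set β := traceForm k g V with hβ
  let I : LieIdeal k g :=
    { LinearMap.ker β with
      lie_mem := by
        intro x m hm
        change β m = 0 at hm
        change β ⁅x, m⁆ = 0
        ext z
        have := traceForm_apply_lie_apply k g V m x z
        rw [← lie_skew, map_neg, LinearMap.neg_apply, this, ← hβ, hm]
        simp }
  have hI : ∀ y, y ∈ I ↔ β y = 0 := fun y => Iff.rfl
  have hc := LieIdeal.isCompl_killingCompl I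
  set J := LieIdeal.killingCompl k g I
  let γ : LinearMap.BilinForm k J := β.restrict J.toSubmodule
  have hγ : ∀ a b : J, γ a b = β a b := fun a b => rfl
  have hsymm : γ.IsSymm := ⟨fun a b => traceForm_comm k g V a b⟩
  have hnd : γ.Nondegenerate := by
    refine hsymm.isRefl.nondegenerate_iff_separatingLeft.mpr ?_
    intro y hy
    have hyI : (y : g) ∈ I := by
      rw [hI]
      ext z
      have hz : z ∈ I ⊔ J := by rw [hc.sup_eq_top]; trivial
      obtain ⟨a, ha, b, hb, rfl⟩ := (LieSubmodule.mem_sup _ _ _).mp hz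
      have h1 : β y a = 0 := by
        rw [hβ, traceForm_comm, ← hβ, (hI a).mp ha]; rfl
      have h2 : β y b = 0 := hy ⟨b, hb⟩
      rw [map_add, h1, h2]; simp
    have : (y : g) ∈ I ⊓ J := ⟨hyI, y.2⟩
    rw [hc.inf_eq_bot] at this
    exact Subtype.ext (by simpa using this)
  let b := Module.finBasis k J
  let d := γ.dualBasis hnd b
  refine ⟨Module.finrank k J, fun i => b i, fun i => d i, ?_, ?_, ?_⟩
  · intro h0
    apply h
    have : Subsingleton J := Module.finrank_zero_iff.mp h0
    have hJ : J = ⊥ := by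
      rw [LieSubmodule.eq_bot_iff]
      intro m hm
      exact congrArg Subtype.val (Subsingleton.elim (⟨m, hm⟩ : J) 0)
    have hIt : I = ⊤ := by simpa [hJ] using hc.sup_eq_top
    refine LinearMap.ext fun x => ?_
    exact (hI x).mp (hIt ▸ trivial)
  · have : ∀ i, β (b i) (d i) = 1 := fun i => by
      rw [← hγ]; simpa using LinearMap.BilinForm.apply_dualBasis_right hnd hsymm b i i
    simp [this]
  · intro B x
    have hb : ∀ y : J, (y : g) = ∑ j, β y (d j) • (b j : g) := by
      intro y
      have h1 := b.sum_repr y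
      have h2 : ∀ j, b.repr y j = γ y (d j) := by
        intro j
        have := LinearMap.BilinForm.dualBasis_repr_apply hnd d y j
        rwa [LinearMap.BilinForm.dualBasis_dualBasis hnd hsymm] at this
      conv_lhs => rw [← h1]
      simp [h2, hγ]
    have hd : ∀ y : J, (y : g) = ∑ j, β y (b j) • (d j : g) := by
      intro y
      have h1 := d.sum_repr y
      conv_lhs => rw [← h1]
      simp [d, LinearMap.BilinForm.dualBasis_repr_apply, hγ]
    have e1 : ∀ i, B ⁅x, (b i : g)⁆ (d i) = ∑ j, β ⁅x, (b i : g)⁆ (d j) • B (b j) (d i) := by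
      intro i
      have := hb ⁅x, b i⁆
      rw [LieSubmodule.coe_bracket] at this
      conv_lhs => rw [this]
      simp
    have e2 : ∀ i, B (b i) ⁅x, (d i : g)⁆ = ∑ j, β ⁅x, (d i : g)⁆ (b j) • B (b i) (d j) := by
      intro i
      have := hd ⁅x, d i⁆
      rw [LieSubmodule.coe_bracket] at this
      conv_lhs => rw [this]
      simp
    simp only [e1, e2]
    rw [Finset.sum_comm, ← Finset.sum_add_distrib]
    refine Finset.sum_eq_zero fun i _ => ?_
    rw [← Finset.sum_add_distrib]
    refine Finset.sum_eq_zero fun j _ => ?_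
    rw [← add_smul]
    have : β ⁅x, (b j : g)⁆ (d i) + β ⁅x, (d i : g)⁆ (b j) = 0 := by
      rw [hβ, traceForm_comm k g V ⁅x, (d i : g)⁆, traceForm_apply_lie_apply' k g V x]
      simp
    rw [this, zero_smul]

lemma perfect {k g : Type*} [Field k] [CharZero k]
    [LieRing g] [LieAlgebra k g] [FiniteDimensional k g] [IsKilling k g] :
    derivedSeries k g 1 = ⊤ := by
  set D := derivedSeries k g 1
  have hc := LieIdeal.isCompl_killingCompl D
  set C := LieIdeal.killingCompl k g D
  have : IsLieAbelian C := by
    constructor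
    intro a b
    have h1 : ⁅(a : g), (b : g)⁆ ∈ D :=
      LieSubmodule.lie_mem_lie (LieSubmodule.mem_top _) (LieSubmodule.mem_top _)
    have : ⁅(a : g), (b : g)⁆ ∈ D ⊓ C := ⟨h1, C.lie_mem b.2⟩
    rw [hc.inf_eq_bot] at this
    exact Subtype.ext (by simpa using this)
  have h0 := IsKilling.ideal_eq_bot_of_isLieAbelian C
  simpa [h0] using hc.sup_eq_top

lemma whitehead_irr {k g V : Type*} [Field k] [CharZero k]
    [LieRing g] [LieAlgebra k g] [FiniteDimensional k g] [IsKilling k g]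
    [AddCommGroup V] [Module k V] [LieRingModule g V] [LieModule k g V] [FiniteDimensional k V]
    (hirr : ∀ N : LieSubmodule k g V, N = ⊥ ∨ N = ⊤)
    (c : g →ₗ[k] V) (hcc : ∀ x y, c ⁅x, y⁆ = ⁅x, c y⁆ - ⁅y, c x⁆) :
    ∃ v, ∀ x, c x = ⁅x, v⁆ := by
  by_cases h : traceForm k g V = 0
  · have hn := isNilpotent_derivedSeries_of_traceForm_eq_zero h
    have hn' : LieModule.IsNilpotent g V := by
      rw [isNilpotent_iff_forall' (R := k)] at hn ⊢
      intro x
      exact hn ⟨x, by rw [perfect]; trivial⟩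
    rcases subsingleton_or_nontrivial V with hs | hs
    · exact ⟨0, fun x => Subsingleton.elim _ _⟩
    have hnt := nontrivial_max_triv_of_isNilpotent k g V
    have htop : maxTrivSubmodule k g V = ⊤ := by
      rcases hirr (maxTrivSubmodule k g V) with h | h
      · rw [h] at hnt
        exact absurd hnt (not_nontrivial _)
      · exact h
    have htriv : ∀ (x : g) (v : V), ⁅x, v⁆ = 0 := by
      intro x v
      have : v ∈ maxTrivSubmodule k g V := htop ▸ trivial
      exact (mem_maxTrivSubmodule k g V v).mp this x
    refine ⟨0, fun x => ?_⟩
    rw [htriv]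
    have hx : x ∈ derivedSeries k g 1 := by rw [perfect]; trivial
    have hx' : x ∈ (⁅(⊤ : LieIdeal k g), (⊤ : LieIdeal k g)⁆ : LieIdeal k g).toSubmodule := hx
    rw [LieSubmodule.lieIdeal_oper_eq_linear_span'] at hx'
    refine (Submodule.span_le (p := LinearMap.ker c)).mpr ?_ hx'
    rintro _ ⟨a, -, b, -, rfl⟩
    simp [hcc, htriv]
  · obtain ⟨n, e, f, hn, htr, hinv⟩ := casimir_exists h
    let Ω : V →ₗ[k] V := ∑ i, (toEnd k g V (e i)) ∘ₗ (toEnd k g V (f i))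
    have hΩ : ∀ v, Ω v = ∑ i, ⁅e i, ⁅f i, v⁆⁆ := by intro v; simp [Ω]
    have key : ∀ (c : g →ₗ[k] V) (x : g),
        ∑ i, ⁅⁅x, e i⁆, c (f i)⁆ + ∑ i, ⁅e i, c ⁅x, f i⁆⁆ = 0 := by
      intro c x
      let B : g →ₗ[k] g →ₗ[k] V := LinearMap.mk₂ k (fun a b => ⁅a, c b⁆)
        (by intros; simp) (by intros; simp) (by intros; simp) (by intros; simp)
      exact hinv B x
    have hcomm : ∀ (x : g) (v : V), ⁅x, Ω v⁆ = Ω ⁅x, v⁆ := by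
      intro x v
      let c0 : g →ₗ[k] V := (toEnd k g V : g →ₗ[k] Module.End k V).flip v
      have hc0 : ∀ y, c0 y = ⁅y, v⁆ := fun y => rfl
      have := key c0 x
      simp only [hc0] at this
      rw [hΩ, hΩ, lie_sum, ← sub_eq_zero, ← this, ← Finset.sum_sub_distrib,
        ← Finset.sum_add_distrib]
      refine Finset.sum_congr rfl fun i _ => ?_
      rw [leibniz_lie x (e i), leibniz_lie x (f i)]
      simp only [lie_add]; abel
    let K : LieSubmodule k g V :=
      { LinearMap.ker Ω with
        lie_mem := by
          intro x m hm
          change Ω m = 0 at hm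
          change Ω ⁅x, m⁆ = 0
          rw [← hcomm, hm, lie_zero] }
    have hK : K = ⊥ := by
      refine (hirr K).resolve_right fun hK => ?_
      have : Ω = 0 := by
        ext v
        have hv : v ∈ K := hK ▸ trivial
        exact hv
      have h2 : LinearMap.trace k V Ω = n := by
        rw [← htr]; simp [Ω, traceForm_apply_apply]
      rw [this, map_zero] at h2
      exact hn (by exact_mod_cast h2.symm)
    have hinj : Function.Injective Ω := by
      rw [← LinearMap.ker_eq_bot]
      exact congrArg LieSubmodule.toSubmodule hK
    obtain ⟨v, hv⟩ := LinearMap.surjective_of_injective hinj (∑ i, ⁅e i, c (f i)⁆)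
    refine ⟨v, fun x => hinj ?_⟩
    rw [← hcomm, hv, hΩ, lie_sum, eq_comm, ← sub_eq_zero, ← key c x, ← Finset.sum_sub_distrib,
        ← Finset.sum_add_distrib]
    refine Finset.sum_congr rfl fun i _ => ?_
    rw [leibniz_lie x (e i), hcc x (f i)]
    simp only [lie_sub]; abel

lemma whitehead_aux {k g : Type*} [Field k] [CharZero k]
    [LieRing g] [LieAlgebra k g] [FiniteDimensional k g] [IsKilling k g] (n : ℕ) :
    ∀ (V : Type*) [AddCommGroup V] [Module k V] [LieRingModule g V] [LieModule k g V]
    [FiniteDimensional k V] (_ : Module.finrank k V ≤ n)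
    (c : g →ₗ[k] V) (_ : ∀ x y, c ⁅x, y⁆ = ⁅x, c y⁆ - ⁅y, c x⁆),
    ∃ v, ∀ x, c x = ⁅x, v⁆ := by
  induction n with
  | zero =>
    intro V _ _ _ _ _ hV c hc
    have : Subsingleton V := (Module.finrank_zero_iff (R := k)).mp (by omega)
    exact ⟨0, fun x => Subsingleton.elim _ _⟩
  | succ n ih =>
    intro V _ _ _ _ _ hV c hc
    by_cases hirr : ∀ N : LieSubmodule k g V, N = ⊥ ∨ N = ⊤
    · exact whitehead_irr hirr c hc
    push Not at hirr
    obtain ⟨N, hb, ht⟩ := hirr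
    have h1 : Module.finrank k N < Module.finrank k V :=
      Submodule.finrank_lt (s := N.toSubmodule) (by simpa [lt_top_iff_ne_top] using ht)
    have h0 : Module.finrank k N ≠ 0 := by
      intro h0
      have : N.toSubmodule = ⊥ := Submodule.finrank_eq_zero.mp h0
      exact hb (by simpa using this)
    have h2 : Module.finrank k (V ⧸ N) + Module.finrank k N = Module.finrank k V :=
      Submodule.finrank_quotient_add_finrank N.toSubmodule
    have hfin : FiniteDimensional k (V ⧸ N) :=
      inferInstanceAs (FiniteDimensional k (V ⧸ N.toSubmodule))
    let q : V →ₗ⁅k,g⁆ V ⧸ N := LieSubmodule.Quotient.mk' N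
    obtain ⟨w, hw⟩ := ih (V ⧸ N) (by omega) ((q : V →ₗ[k] V ⧸ N) ∘ₗ c) (by
      intro x y
      simp [hc])
    obtain ⟨v, rfl⟩ := LieSubmodule.Quotient.surjective_mk' N w
    let c0 : g →ₗ[k] V := (toEnd k g V : g →ₗ[k] Module.End k V).flip v
    have hc0 : ∀ y, c0 y = ⁅y, v⁆ := fun y => rfl
    have hm : ∀ x, (c - c0) x ∈ N.toSubmodule := by
      intro x
      have := hw x
      rw [← LieModuleHom.map_lie] at this
      change _ ∈ N
      rw [← LieSubmodule.Quotient.mk_eq_zero]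
      rw [LinearMap.sub_apply, hc0, map_sub, sub_eq_zero]
      exact this
    obtain ⟨u, hu⟩ := ih N (by omega) ((c - c0).codRestrict N.toSubmodule hm) (by
      intro x y
      apply Subtype.ext
      change (c - c0) ⁅x, y⁆ = ⁅x, (c - c0) y⁆ - ⁅y, (c - c0) x⁆
      simp only [LinearMap.sub_apply, hc0, hc, lie_sub, lie_lie]
      abel)
    refine ⟨v + u, fun x => ?_⟩
    have := congrArg Subtype.val (hu x)
    change (c - c0) x = ⁅x, (u : V)⁆ at this
    rw [LinearMap.sub_apply, hc0, sub_eq_iff_eq_add] at this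
    rw [this, lie_add, add_comm]

theorem stmt_4 (k : Type*) [Field k] [CharZero k]
    (g : Type*) [LieRing g] [LieAlgebra k g] [FiniteDimensional k g]
    (hKilling : (killingForm k g).Nondegenerate)
    (M : Type*) [AddCommGroup M] [Module k M] [LieRingModule g M] [LieModule k g M]
    [FiniteDimensional k M] :
    ∀ N : LieSubmodule k g M, ∃ N' : LieSubmodule k g M, IsCompl N N' := by
  intro N
  have hK : IsKilling k g := by
    constructor
    rw [← LieSubmodule.toSubmodule_inj]
    exact (LieIdeal.coe_killingCompl_top k g).trans hKilling.ker_eq_bot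
  obtain ⟨p, hp⟩ := N.toSubmodule.exists_isCompl.imp fun Q hQ => hQ
  obtain ⟨P, hP⟩ : ∃ P : M →ₗ[k] M, (∀ m, P m ∈ N) ∧ ∀ m ∈ N, P m = m :=
    ⟨N.toSubmodule.projection p hp, fun m => by rw [Submodule.projection_apply]; exact Subtype.prop _,
      fun m hm => Submodule.projection_apply_left hp ⟨m, hm⟩⟩
  let U : LieSubmodule k g (M →ₗ[k] M) :=
    { carrier := {F | (∀ m, F m ∈ N) ∧ ∀ m ∈ N, F m = 0}
      add_mem' := by
        rintro a b ⟨ha, ha'⟩ ⟨hb, hb'⟩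
        exact ⟨fun m => N.add_mem (ha m) (hb m), fun m hm => by simp [ha' m hm, hb' m hm]⟩
      zero_mem' := ⟨fun m => N.zero_mem, fun m hm => rfl⟩
      smul_mem' := by
        rintro r a ⟨ha, ha'⟩
        exact ⟨fun m => N.smul_mem r (ha m), fun m hm => by simp [ha' m hm]⟩
      lie_mem := by
        rintro x a ⟨ha, ha'⟩
        refine ⟨fun m => ?_, fun m hm => ?_⟩
        · rw [LieHom.lie_apply]
          exact N.sub_mem (N.lie_mem (ha m)) (ha _)
        · rw [LieHom.lie_apply, ha' m hm, ha' _ (N.lie_mem hm)]; simp }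
  let c0 : g →ₗ[k] (M →ₗ[k] M) :=
    (toEnd k g (M →ₗ[k] M) : g →ₗ[k] Module.End k (M →ₗ[k] M)).flip P
  have hc0 : ∀ x, c0 x = ⁅x, P⁆ := fun x => rfl
  have hm : ∀ x, c0 x ∈ U.toSubmodule := by
    intro x
    refine ⟨fun m => ?_, fun m hm => ?_⟩
    · rw [hc0, LieHom.lie_apply]
      exact N.sub_mem (N.lie_mem (hP.1 m)) (hP.1 _)
    · rw [hc0, LieHom.lie_apply, hP.2 m hm, hP.2 _ (N.lie_mem hm), sub_self]
  obtain ⟨u, hu⟩ := whitehead_aux (k := k) (g := g) _ U le_rfl (c0.codRestrict U.toSubmodule hm) (by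
    intro x y
    apply Subtype.ext
    change c0 ⁅x, y⁆ = ⁅x, c0 y⁆ - ⁅y, c0 x⁆
    simp only [hc0, lie_lie])
  have hu' : ∀ x, ⁅x, P⁆ = ⁅x, (u : M →ₗ[k] M)⁆ := fun x => congrArg Subtype.val (hu x)
  obtain ⟨F, hF⟩ := u
  obtain ⟨hF1, hF2⟩ := hF
  have hG : ∀ (x : g) (m : M), ⁅x, (P - F) m⁆ = (P - F) ⁅x, m⁆ := by
    intro x m
    have := LinearMap.congr_fun (hu' x) m
    simp only [LieHom.lie_apply] at this
    simp only [LinearMap.sub_apply, lie_sub]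
    rw [sub_eq_sub_iff_sub_eq_sub]
    exact this
  have hG1 : ∀ m, (P - F) m ∈ N := fun m => N.sub_mem (hP.1 m) (hF1 m)
  have hG2 : ∀ m ∈ N, (P - F) m = m := fun m hm => by
    simp [hP.2 m hm, hF2 m hm]
  generalize P - F = G at hG hG1 hG2
  refine ⟨{ LinearMap.ker G with
      lie_mem := by
        intro x m hm
        change G m = 0 at hm
        change G ⁅x, m⁆ = 0
        rw [← hG, hm, lie_zero] }, ?_⟩
  rw [← LieSubmodule.isCompl_toSubmodule]
  change IsCompl N.toSubmodule (LinearMap.ker G)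
  constructor
  · rw [Submodule.disjoint_def]
    intro m hm hm'
    rw [← hG2 m hm]; exact hm'
  · rw [codisjoint_iff, eq_top_iff]
    intro m _
    refine Submodule.mem_sup.mpr ⟨G m, hG1 m, m - G m, ?_, by abel⟩
    rw [LinearMap.mem_ker, map_sub, hG2 _ (hG1 m), sub_self]
end

section
/- Let g be a finite-dimensional semisimple Lie algebra over a field of characteristic zero and M a finite-dimensional g-module. Then the first Lie algebra cohomology H^1(g, M) vanishes; equivalently, every derivation (1-cocycle) d : g → M satisfying d([x,y]) = x·d(y) − y·d(x) is of the form d(x) = x·m for some fixed m ∈ M. -/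
open LieModule LieAlgebra in
theorem wh_perfect (k : Type*) [Field k] (g : Type*) [LieRing g] [LieAlgebra k g]
    [FiniteDimensional k g] [IsKilling k g] : derivedSeries k g 1 = ⊤ := by
  obtain ⟨J, hJ⟩ := exists_isCompl (derivedSeries k g 1)
  have hJb : J = ⊥ := by
    rw [LieSubmodule.eq_bot_iff]
    intro x hx
    have hc : x ∈ center k g := by
      rw [mem_maxTrivSubmodule]
      intro y
      have h1 : ⁅y, x⁆ ∈ derivedSeries k g 1 := by
        rw [derivedSeries_def, derivedSeriesOfIdeal_succ, derivedSeriesOfIdeal_zero]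
        exact LieSubmodule.lie_mem_lie (LieSubmodule.mem_top y) (LieSubmodule.mem_top x)
      have h2 : ⁅y, x⁆ ∈ J := J.lie_mem hx
      have h3 : ⁅y, x⁆ ∈ derivedSeries k g 1 ⊓ J := ⟨h1, h2⟩
      rwa [hJ.inf_eq_bot, LieSubmodule.mem_bot] at h3
    rwa [center_eq_bot, LieSubmodule.mem_bot] at hc
  have := hJ.sup_eq_top
  rwa [hJb, sup_bot_eq] at this

open LieModule LieAlgebra in
theorem wh_span (k : Type*) [Field k] (g : Type*) [LieRing g] [LieAlgebra k g]
    [FiniteDimensional k g] [IsKilling k g] (x : g) :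
    x ∈ Submodule.span k {z : g | ∃ a b : g, ⁅a, b⁆ = z} := by
  have h : x ∈ derivedSeries k g 1 := by rw [wh_perfect]; exact LieSubmodule.mem_top x
  rw [derivedSeries_def, derivedSeriesOfIdeal_succ, derivedSeriesOfIdeal_zero,
    ← LieSubmodule.mem_toSubmodule, LieSubmodule.lieIdeal_oper_eq_linear_span] at h
  refine Submodule.span_mono ?_ h
  rintro z ⟨a, b, rfl⟩
  exact ⟨a, b, rfl⟩

open LieModule LieAlgebra in
theorem wh_trivial (k : Type*) [Field k] [CharZero k] (g : Type*) [LieRing g] [LieAlgebra k g]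
    [FiniteDimensional k g] [IsKilling k g]
    (M : Type*) [AddCommGroup M] [Module k M] [LieRingModule g M] [LieModule k g M]
    [FiniteDimensional k M] (h : traceForm k g M = 0) (x : g) (m : M) : ⁅x, m⁆ = 0 := by
  have hn := isNilpotent_derivedSeries_of_traceForm_eq_zero h
  rw [LieModule.isNilpotent_iff k] at hn
  obtain ⟨j, hj⟩ := hn
  have key : ∀ j, ∀ (x : g) (m : M),
      ⁅x, m⁆ ∈ lowerCentralSeries k (derivedSeries k g 1) M j := by
    intro j
    induction j with
    | zero => intro x m; simp
    | succ j ih =>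
      have ih2 : ∀ (a : g) (n : M), n ∈ lowerCentralSeries k (derivedSeries k g 1) M j →
          ⁅a, n⁆ ∈ lowerCentralSeries k (derivedSeries k g 1) M (j + 1) := by
        intro a n hn
        have ha : a ∈ derivedSeries k g 1 := by rw [wh_perfect]; exact LieSubmodule.mem_top a
        rw [lowerCentralSeries_succ]
        exact LieSubmodule.lie_mem_lie
          (LieSubmodule.mem_top (⟨a, ha⟩ : derivedSeries k g 1)) hn
      intro x m
      induction wh_span k g x using Submodule.span_induction with
      | mem z hz =>
        obtain ⟨a, b, rfl⟩ := hz
        rw [lie_lie]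
        exact sub_mem (ih2 _ _ (ih _ _)) (ih2 _ _ (ih _ _))
      | zero => simp
      | add a b _ _ ha hb => rw [add_lie]; exact add_mem ha hb
      | smul c a _ ha =>
        rw [smul_lie]; exact (lowerCentralSeries k (derivedSeries k g 1) M (j + 1)).smul_mem c ha
  have := key j x m
  rwa [hj, LieSubmodule.mem_bot] at this

open LieModule LieAlgebra in
theorem wh_casimir (k : Type*) [Field k] [CharZero k] (g : Type*) [LieRing g] [LieAlgebra k g]
    [FiniteDimensional k g] [IsKilling k g]
    (M : Type*) [AddCommGroup M] [Module k M] [LieRingModule g M] [LieModule k g M]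
    [FiniteDimensional k M] (h : traceForm k g M ≠ 0) :
    ∃ (n : ℕ) (e f : Fin n → g),
      (∀ (T : g →ₗ[k] g →ₗ[k] M) (x : g),
        ∑ i, (T ⁅x, e i⁆ (f i) + T (e i) ⁅x, f i⁆) = 0) ∧
      ∑ i, traceForm k g M (e i) (f i) ≠ 0 := by
  classical
  let K : LieIdeal k g :=
    InvariantForm.orthogonal (traceForm k g M) (traceForm_lieInvariant k g M) ⊤
  have hK : ∀ x, x ∈ K ↔ ∀ y, traceForm k g M y x = 0 := by
    intro x
    simp [K, InvariantForm.mem_orthogonal]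
  obtain ⟨I, hI⟩ := exists_isCompl K
  let B : LinearMap.BilinForm k I := (traceForm k g M).restrict I.toSubmodule
  have hBa : ∀ x y : I, B x y = traceForm k g M x y := fun _ _ => rfl
  have hBs : B.IsSymm := ⟨fun x y => traceForm_comm k g M x y⟩
  have hBn : B.Nondegenerate := by
    refine hBs.isRefl.nondegenerate_iff_separatingLeft.mpr ?_
    intro x hx
    have hxK : (x : g) ∈ K := by
      rw [hK]
      intro y
      have hy : y ∈ K ⊔ I := by rw [hI.sup_eq_top]; exact LieSubmodule.mem_top y
      obtain ⟨a, ha, b, hb, rfl⟩ := LieSubmodule.mem_sup _ _ _ |>.mp hy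
      rw [map_add, LinearMap.add_apply, traceForm_comm k g M a, (hK a).mp ha,
        traceForm_comm k g M b, zero_add]
      exact hx ⟨b, hb⟩
    have h3 : (x : g) ∈ K ⊓ I := ⟨hxK, x.2⟩
    rw [hI.inf_eq_bot, LieSubmodule.mem_bot] at h3
    exact Subtype.ext h3
  let b := Module.finBasis k I
  let b' := B.dualBasis hBn b
  have hbb : B.dualBasis hBn b' = b := LinearMap.BilinForm.dualBasis_dualBasis hBn hBs b
  have exp1 : ∀ y : I, (y : g) = ∑ j, B y (b' j) • (b j : g) := by
    intro y
    have := b.sum_repr y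
    conv_lhs => rw [← this]
    simp only [AddSubmonoidClass.coe_finsetSum, LieSubmodule.coe_smul]
    refine Finset.sum_congr rfl fun j _ => ?_
    congr 1
    conv_lhs => rw [← hbb]
    exact LinearMap.BilinForm.dualBasis_repr_apply hBn b' y j
  have exp2 : ∀ y : I, (y : g) = ∑ j, B y (b j) • (b' j : g) := by
    intro y
    have := b'.sum_repr y
    conv_lhs => rw [← this]
    simp only [AddSubmonoidClass.coe_finsetSum, LieSubmodule.coe_smul]
    refine Finset.sum_congr rfl fun j _ => ?_
    congr 1
    exact LinearMap.BilinForm.dualBasis_repr_apply hBn b y j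
  refine ⟨_, fun i => (b i : g), fun i => (b' i : g), ?_, ?_⟩
  · intro T x
    rw [Finset.sum_add_distrib]
    have h1 : ∀ i, T ⁅x, (b i : g)⁆ (b' i) =
        ∑ j, traceForm k g M ⁅x, (b i : g)⁆ (b' j) • T (b j) (b' i) := by
      intro i
      have := exp1 ⁅x, b i⁆
      rw [LieSubmodule.coe_bracket] at this
      conv_lhs => rw [this]
      simp [hBa]
    have h2 : ∀ i, T (b i) ⁅x, (b' i : g)⁆ =
        ∑ j, traceForm k g M ⁅x, (b' i : g)⁆ (b j) • T (b i) (b' j) := by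
      intro i
      have := exp2 ⁅x, b' i⁆
      rw [LieSubmodule.coe_bracket] at this
      conv_lhs => rw [this]
      simp [hBa]
    simp_rw [h1, h2]
    rw [Finset.sum_comm (f := fun i j =>
      traceForm k g M ⁅x, (b' i : g)⁆ (b j) • T (b i) (b' j)), ← Finset.sum_add_distrib]
    refine Finset.sum_eq_zero fun i _ => ?_
    rw [← Finset.sum_add_distrib]
    refine Finset.sum_eq_zero fun j _ => ?_
    rw [traceForm_apply_lie_apply' k g M x (b i), traceForm_comm k g M (b i), ← add_smul]
    simp
  · have : ∀ i, traceForm k g M (b i) (b' i) = 1 := by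
      intro i
      have := LinearMap.BilinForm.apply_dualBasis_right hBn hBs b i i
      rw [if_pos rfl] at this
      exact this
    simp only [this, Finset.sum_const, Finset.card_univ, Fintype.card_fin, nsmul_eq_mul, mul_one]
    rw [Nat.cast_ne_zero]
    intro h0
    have hsub : Subsingleton I := Module.finrank_zero_iff.mp h0
    apply h
    have hKtop : K = ⊤ := by
      have hIb : I = ⊥ := by
        rw [LieSubmodule.eq_bot_iff]
        intro x hx
        exact congrArg Subtype.val (Subsingleton.elim (⟨x, hx⟩ : I) 0)
      have := hI.sup_eq_top
      rwa [hIb, sup_bot_eq] at this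
    ext x y
    exact (hK y).mp (hKtop ▸ LieSubmodule.mem_top y) x

open LieModule LieAlgebra in
theorem wh_main (k : Type*) [Field k] [CharZero k] (g : Type*) [LieRing g] [LieAlgebra k g]
    [FiniteDimensional k g] [IsKilling k g] (N : ℕ) :
    ∀ (M : Type*) [AddCommGroup M] [Module k M] [LieRingModule g M] [LieModule k g M]
    [FiniteDimensional k M] (_ : Module.finrank k M ≤ N)
    (d : g →ₗ[k] M) (_ : ∀ x y : g, d ⁅x, y⁆ = ⁅x, d y⁆ - ⁅y, d x⁆),
    ∃ m : M, ∀ x : g, d x = ⁅x, m⁆ := by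
  induction N with
  | zero =>
    intro M _ _ _ _ _ hN d hd
    have : Subsingleton M := Module.finrank_zero_iff.mp (Nat.le_zero.mp hN)
    exact ⟨0, fun x => Subsingleton.elim _ _⟩
  | succ N ih =>
    intro M _ _ _ _ _ hN d hd
    by_cases h : traceForm k g M = 0
    · have ht := wh_trivial k g M h
      refine ⟨0, fun x => ?_⟩
      rw [ht]
      induction wh_span k g x using Submodule.span_induction with
      | mem z hz =>
        obtain ⟨a, b, rfl⟩ := hz
        rw [hd, ht, ht, sub_zero]
      | zero => simp
      | add a b _ _ ha hb => rw [map_add, ha, hb, add_zero]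
      | smul c a _ ha => rw [map_smul, ha, smul_zero]
    obtain ⟨n, e, f, hT, htr⟩ := wh_casimir k g M h
    let C : Module.End k M := ∑ i, toEnd k g M (e i) * toEnd k g M (f i)
    have hCa : ∀ m, C m = ∑ i, ⁅e i, ⁅f i, m⁆⁆ := by
      intro m
      simp [C, LinearMap.sum_apply]
    have hCtr : LinearMap.trace k M C ≠ 0 := by
      simp only [C, map_sum]
      exact htr
    have hCx : ∀ (x : g) (m : M), ⁅x, C m⁆ = C ⁅x, m⁆ := by
      intro x m
      have := hT ((toEnd k g M : g →ₗ[k] Module.End k M).compl₂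
        ((toEnd k g M : g →ₗ[k] Module.End k M).flip m) |> id) x
      simp only [id, LinearMap.compl₂_apply, LinearMap.flip_apply, LieHom.coe_toLinearMap,
        toEnd_apply_apply] at this
      rw [hCa, hCa, lie_sum, ← sub_eq_zero, ← Finset.sum_sub_distrib, ← this]
      refine Finset.sum_congr rfl fun i _ => ?_
      simp only [lie_lie, lie_sub]
      abel
    let m0 : M := ∑ i, ⁅e i, d (f i)⁆
    have hm0 : ∀ x, ⁅x, m0⁆ = C (d x) := by
      intro x
      have := hT ((toEnd k g M : g →ₗ[k] Module.End k M).compl₂ d) x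
      simp only [LinearMap.compl₂_apply, LieHom.coe_toLinearMap, toEnd_apply_apply] at this
      rw [hCa, lie_sum, ← sub_eq_zero, ← Finset.sum_sub_distrib, ← this]
      refine Finset.sum_congr rfl fun i _ => ?_
      simp only [hd, lie_lie, lie_sub]
      abel
    have hCp : ∀ (j : ℕ) (x : g) (m : M), ⁅x, (C ^ j) m⁆ = (C ^ j) ⁅x, m⁆ := by
      intro j
      induction j with
      | zero => intro x m; simp
      | succ j ihj => intro x m; simp only [pow_succ, Module.End.mul_apply, ihj, hCx]
    obtain ⟨j, hj⟩ := Filter.eventually_atTop.mp C.eventually_isCompl_ker_pow_range_pow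
    replace hj := hj (j + 1) (Nat.le_succ j)
    have hm1 : ∀ x, ⁅x, (C ^ j) m0⁆ = (C ^ (j + 1)) (d x) := by
      intro x
      rw [hCp, hm0, pow_succ, Module.End.mul_apply]
    set D := C ^ (j + 1) with hD
    have hDx : ∀ (x : g) (m : M), ⁅x, D m⁆ = D ⁅x, m⁆ := hCp (j + 1)
    obtain ⟨a, ha, b', ⟨b, rfl⟩, hab⟩ := Submodule.mem_sup.mp
      (show (C ^ j) m0 ∈ LinearMap.ker D ⊔ LinearMap.range D by
        rw [hj.sup_eq_top]; exact Submodule.mem_top)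
    let P : LieSubmodule k g M :=
      { LinearMap.ker D with
        lie_mem := by
          intro x m hm
          change D ⁅x, m⁆ = 0
          have hm' : D m = 0 := hm
          rw [← hDx, hm', lie_zero] }
    have hP : ∀ m, m ∈ P ↔ D m = 0 := fun m => Iff.rfl
    have hker : ∀ x, d x - ⁅x, b⁆ ∈ P := by
      intro x
      have h1 : D (d x - ⁅x, b⁆) = ⁅x, a⁆ := by
        rw [map_sub, ← hm1, ← hab, lie_add, hDx, add_sub_cancel_right]
      have h2 : ⁅x, a⁆ ∈ LinearMap.ker D := P.lie_mem (x := x) ha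
      have h3 : ⁅x, a⁆ ∈ LinearMap.ker D ⊓ LinearMap.range D := ⟨h2, ⟨_, h1⟩⟩
      rw [hj.inf_eq_bot, Submodule.mem_bot] at h3
      rw [hP, h1, h3]
    have hlt : Module.finrank k P < Module.finrank k M := by
      apply Submodule.finrank_lt (s := P.toSubmodule)
      intro htop
      have hD0 : D = 0 := by
        ext m
        have : m ∈ P.toSubmodule := htop ▸ Submodule.mem_top
        exact this
      exact hCtr (LinearMap.isNilpotent_trace_of_isNilpotent ⟨j + 1, hD0⟩).eq_zero
    let d' : g →ₗ[k] P := LinearMap.codRestrict P.toSubmodule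
      (d - (toEnd k g M : g →ₗ[k] Module.End k M).flip b) hker
    have hd'a : ∀ x, (d' x : M) = d x - ⁅x, b⁆ := fun x => rfl
    obtain ⟨p, hp⟩ := ih P (by omega) d' (by
      intro x y
      apply Subtype.ext
      rw [LieSubmodule.coe_sub, LieSubmodule.coe_bracket, LieSubmodule.coe_bracket,
        hd'a, hd'a, hd'a, hd, lie_lie, lie_sub, lie_sub]
      abel)
    refine ⟨p + b, fun x => ?_⟩
    have := congrArg Subtype.val (hp x)
    rw [hd'a, LieSubmodule.coe_bracket] at this
    rw [lie_add, ← this, sub_add_cancel]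


/-- Whitehead's first lemma: for a finite-dimensional Lie algebra `g` with
nondegenerate Killing form over a field of characteristic zero and a
finite-dimensional `g`-module `M`, every 1-cocycle `d : g → M`
(`d ⁅x, y⁆ = x • d y − y • d x`) is a coboundary (`d x = x • m`). -/
theorem stmt_5 (k : Type*) [Field k] [CharZero k]
    (g : Type*) [LieRing g] [LieAlgebra k g] [FiniteDimensional k g]
    (hKilling : (killingForm k g).Nondegenerate)
    (M : Type*) [AddCommGroup M] [Module k M] [LieRingModule g M] [LieModule k g M]
    [FiniteDimensional k M]
    (d : g →ₗ[k] M) (hd : ∀ x y : g, d ⁅x, y⁆ = ⁅x, d y⁆ - ⁅y, d x⁆) :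
    ∃ m : M, ∀ x : g, d x = ⁅x, m⁆ := by
  have : LieAlgebra.IsKilling k g := ⟨by
    rw [← LieSubmodule.toSubmodule_eq_bot]
    refine (LieIdeal.coe_killingCompl_top k g).trans ?_
    exact LinearMap.separatingLeft_iff_ker_eq_bot.mp hKilling.1⟩
  exact wh_main k g _ M le_rfl d hd
end
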